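/- Let f be in the class 𝓕 and let n ≥ 2. Then the n-th section s_n(f) is injective (univalent) on the disk |z| < 1/3. -/

import Mathlib

open Complex Metric

/-- The class 𝓕 of normalized locally univalent analytic functions on the unit disk
satisfying `Re (1 + z f''(z)/f'(z)) > -1/2`. -/
def IsInClassF (f : ℂ → ℂ) : Prop :=
  AnalyticOnNhd ℂ f (ball (0 : ℂ) 1) ∧ f 0 = 0 ∧ deriv f 0 = 1 ∧
    (∀ z ∈ ball (0 : ℂ) 1, deriv f z ≠ 0) ∧
    (∀ z ∈ ball (0 : ℂ) 1, (1 + z * deriv (deriv f) z / deriv f z).re > -(1/2))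

/-- The `n`-th section (partial sum) `s_n(f)(z) = z + ∑_{k=2}^n a_k z^k`, where
`a_k = f^{(k)}(0)/k!`. -/
noncomputable def sectionF (f : ℂ → ℂ) (n : ℕ) (z : ℂ) : ℂ :=
  ∑ k ∈ Finset.Icc 1 n, (iteratedDeriv k f 0 / (Nat.factorial k)) * z ^ k

/-- **Noshiro–Warschawski**. -/
theorem injOn_of_re_deriv_pos {s : Set ℂ} (hs : Convex ℝ s) {F F' : ℂ → ℂ}
    (hF : ∀ z ∈ s, HasDerivAt F (F' z) z) (h : ∀ z ∈ s, 0 < (F' z).re) : Set.InjOn F s := by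
  intro z hz w hw hzw
  by_contra hne
  have hd : w - z ≠ 0 := sub_ne_zero.mpr (Ne.symm hne)
  have hmem : ∀ t ∈ Set.Icc (0 : ℝ) 1, z + (t : ℂ) * (w - z) ∈ s := by
    intro t ht
    have := hs.add_smul_sub_mem hz hw ht
    simpa using this
  have hder : ∀ t ∈ Set.Icc (0 : ℝ) 1, HasDerivAt
      (fun t : ℝ ↦ (F (z + (t : ℂ) * (w - z)) / (w - z)).re)
      (F' (z + (t : ℂ) * (w - z))).re t := by
    intro t ht
    have h1 : HasDerivAt (fun x : ℂ ↦ z + x * (w - z)) (w - z) (t : ℂ) := by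
      simpa using ((hasDerivAt_id (t : ℂ)).mul_const (w - z)).const_add z
    have h2 := ((hF _ (hmem t ht)).comp (t : ℂ) h1).div_const (w - z)
    rw [mul_div_cancel_right₀ _ hd] at h2
    exact h2.real_of_complex
  obtain ⟨c, hc, hcd⟩ := exists_hasDerivAt_eq_slope _ _ zero_lt_one
    (fun t ht ↦ (hder t ht).continuousAt.continuousWithinAt)
    (fun t ht ↦ hder t (Set.Ioo_subset_Icc_self ht))
  have := h _ (hmem c (Set.Ioo_subset_Icc_self hc))
  rw [hcd] at this
  simp [hzw] at this

/-- Taylor coefficients as circle averages. -/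
theorem iteratedDeriv_eq_circleAverage {g : ℂ → ℂ} {r : ℝ} (hr : 0 < r)
    (hg : DiffContOnCl ℂ g (ball 0 r)) (m : ℕ) :
    iteratedDeriv m g 0 = m.factorial * Real.circleAverage (fun z ↦ (z ^ m)⁻¹ * g z) 0 r := by
  have h := DiffContOnCl.circleIntegral_one_div_sub_center_pow_smul hr m hg
  rw [Real.circleAverage_eq_circleIntegral hr.ne']
  have hm : (m.factorial : ℂ) ≠ 0 := by exact_mod_cast m.factorial_ne_zero
  have e : (∮ z in C(0, r), (z - 0)⁻¹ • ((z ^ m)⁻¹ * g z)) =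
      ∮ z in C(0, r), (1 / (z - 0) ^ (m + 1)) • g z := by
    congr 1; ext z; simp [pow_succ, mul_comm, mul_left_comm]
  rw [e, h]
  have hpi := Complex.two_pi_I_ne_zero
  simp only [smul_eq_mul]
  field_simp

/-- **Carathéodory's coefficient bound**. -/
theorem norm_iteratedDeriv_le_of_re_mul_ge {g : ℂ → ℂ} (hg : DifferentiableOn ℂ g (ball 0 1))
    {c : ℝ} (h : ∀ z ∈ ball (0 : ℂ) 1, -c ≤ (z * g z).re) (m : ℕ) :
    ‖iteratedDeriv m g 0‖ ≤ m.factorial * (2 * c) := by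
  have key : ∀ r ∈ Set.Ioo (0 : ℝ) 1,
      ‖iteratedDeriv m g 0‖ * r ^ (m + 1) ≤ m.factorial * (2 * c) := by
    rintro r ⟨hr, hr1⟩
    have hcb : closedBall (0 : ℂ) r ⊆ ball 0 1 := closedBall_subset_ball hr1
    have hgc : DifferentiableOn ℂ g (closedBall 0 r) := hg.mono hcb
    have hgcont : ContinuousOn g (sphere 0 r) := hgc.continuousOn.mono sphere_subset_closedBall
    have hcoef := iteratedDeriv_eq_circleAverage hr (hgc.diffContOnCl_ball subset_rfl) m
    have hne : ∀ z ∈ sphere (0 : ℂ) |r|, z ≠ 0 := by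
      rintro z hz rfl
      rw [abs_of_pos hr, mem_sphere_zero_iff_norm, norm_zero] at hz
      exact hr.ne hz
    set P : ℂ → ℂ := fun z ↦ z ^ (m + 1) * (z * g z + 2 * c)
    have hPd : DifferentiableOn ℂ P (closedBall 0 r) := by
      intro z hz
      have := hgc z hz
      fun_prop
    have hP0 : Real.circleAverage P 0 r = 0 := by
      have h2 : DiffContOnCl ℂ P (ball 0 |r|) := by
        rw [abs_of_pos hr]; exact hPd.diffContOnCl_ball subset_rfl
      rw [h2.circleAverage]; simp [P]
    have hPi : CircleIntegrable P 0 r :=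
      (hPd.continuousOn.mono sphere_subset_closedBall).circleIntegrable hr.le
    have hconj : Real.circleAverage (fun z ↦ (starRingEnd ℂ) (P z)) 0 r = 0 := by
      have := (Complex.conjCLE : ℂ →L[ℝ] ℂ).circleAverage_comp_comm hPi
      rw [hP0, map_zero] at this
      exact this
    have hgi : CircleIntegrable (fun z ↦ (z ^ m)⁻¹ * g z) 0 r := by
      apply ContinuousOn.circleIntegrable hr.le
      refine ContinuousOn.mul (ContinuousOn.inv₀ (by fun_prop) ?_) hgcont
      intro z hz
      exact pow_ne_zero _ (hne z (by rwa [abs_of_pos hr]))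
    have hPci : CircleIntegrable (fun z ↦ (starRingEnd ℂ) (P z)) 0 r :=
      (Complex.continuous_conj.comp_continuousOn
        (hPd.continuousOn.mono sphere_subset_closedBall)).circleIntegrable hr.le
    set ρ : ℂ := (r : ℂ) ^ (2 * (m + 1))
    have hsum : Real.circleAverage (fun z ↦ (starRingEnd ℂ) z ^ (m + 1) *
        ((2 * ((z * g z).re + c) : ℝ) : ℂ)) 0 r =
        ρ * Real.circleAverage (fun z ↦ (z ^ m)⁻¹ * g z) 0 r := by
      have h1 : Real.circleAverage (fun z ↦ ρ • ((z ^ m)⁻¹ * g z) + (starRingEnd ℂ) (P z)) 0 r =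
          ρ * Real.circleAverage (fun z ↦ (z ^ m)⁻¹ * g z) 0 r := by
        rw [Real.circleAverage_fun_add (hgi.const_fun_smul) hPci, hconj, add_zero,
          Real.circleAverage_fun_smul, smul_eq_mul]
      rw [← h1]
      apply Real.circleAverage_congr_sphere
      intro z hz
      have hz0 := hne z hz
      have hzz : (r : ℂ) ^ 2 = z * (starRingEnd ℂ) z := by
        rw [Complex.mul_conj, Complex.normSq_eq_norm_sq]
        rw [mem_sphere_zero_iff_norm, abs_of_pos hr] at hz
        rw [hz, ofReal_pow]
      have hρ : ρ = z ^ (m + 1) * (starRingEnd ℂ) z ^ (m + 1) := by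
        simp only [ρ]; rw [pow_mul, hzz, mul_pow]
      have hre : (((z * g z).re : ℝ) : ℂ) * 2 = z * g z + (starRingEnd ℂ) (z * g z) := by
        rw [Complex.add_conj]; push_cast; ring
      simp only [P, smul_eq_mul, hρ, map_mul, map_add, map_pow, Complex.conj_ofReal, map_ofNat]
      push_cast
      rw [map_mul] at hre
      have e1 : z ^ (m + 1) * (starRingEnd ℂ) z ^ (m + 1) * ((z ^ m)⁻¹ * g z) =
          (starRingEnd ℂ) z ^ (m + 1) * (z * g z) := by
        field_simp
        ring
      rw [e1]
      linear_combination (starRingEnd ℂ) z ^ (m + 1) * hre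
    have hbound : ‖Real.circleAverage (fun z ↦ (starRingEnd ℂ) z ^ (m + 1) *
        ((2 * ((z * g z).re + c) : ℝ) : ℂ)) 0 r‖ ≤ r ^ (m + 1) * (2 * c) := by
      set v : ℂ → ℝ := fun z ↦ r ^ (m + 1) * (2 * ((z * g z).re + c))
      have hvi : Real.circleAverage v 0 r = r ^ (m + 1) * (2 * c) := by
        set Q : ℂ → ℂ := fun z ↦ (r : ℂ) ^ (m + 1) * (2 * (z * g z + c))
        have hQd : DifferentiableOn ℂ Q (closedBall 0 r) := by
          intro z hz
          have := hgc z hz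
          fun_prop
        have h2 : DiffContOnCl ℂ Q (ball 0 |r|) := by
          rw [abs_of_pos hr]; exact hQd.diffContOnCl_ball subset_rfl
        have h3 := Complex.reCLM.circleAverage_comp_comm
          ((hQd.continuousOn.mono sphere_subset_closedBall).circleIntegrable hr.le)
        have h4 : (Complex.reCLM ∘ Q) = v := by
          ext z
          simp only [Function.comp_apply, Complex.reCLM_apply, Q, v]
          rw [← ofReal_pow, re_ofReal_mul, show (2 : ℂ) = ((2 : ℝ) : ℂ) by simp, re_ofReal_mul,
            add_re, ofReal_re]
        rw [h4, h2.circleAverage] at h3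
        rw [h3]
        simp only [Complex.reCLM_apply, Q]
        rw [← ofReal_pow, re_ofReal_mul, show (2 : ℂ) = ((2 : ℝ) : ℂ) by simp, re_ofReal_mul]
        simp
      rw [← hvi]
      unfold Real.circleAverage
      rw [norm_smul, smul_eq_mul, Real.norm_of_nonneg (by positivity)]
      gcongr
      refine (intervalIntegral.norm_integral_le_integral_norm (by positivity)).trans_eq ?_
      apply intervalIntegral.integral_congr
      intro θ _
      have hm : circleMap 0 r θ ∈ ball (0 : ℂ) 1 := by
        simp [abs_of_pos hr, hr1]
      have := h _ hm
      simp only [v, norm_mul, norm_pow, RCLike.norm_conj, norm_circleMap_zero, abs_of_pos hr,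
        Complex.norm_real, Real.norm_eq_abs]
      rw [abs_two, abs_of_nonneg (by linarith : 0 ≤ (circleMap 0 r θ * g (circleMap 0 r θ)).re + c)]
    rw [hsum] at hbound
    rw [hcoef]
    simp only [ρ, norm_mul, norm_pow, Complex.norm_natCast, Complex.norm_real, Real.norm_of_nonneg hr.le]
      at hbound ⊢
    have hp : 0 < r ^ (m + 1) := by positivity
    have : r ^ (m + 1) * ‖Real.circleAverage (fun z ↦ (z ^ m)⁻¹ * g z) 0 r‖ ≤ 2 * c := by
      rw [two_mul (m + 1), pow_add, mul_assoc] at hbound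
      exact le_of_mul_le_mul_left hbound hp
    rw [mul_assoc, mul_comm _ (r ^ (m + 1))]
    gcongr
  have hlim : Filter.Tendsto (fun r : ℝ ↦ ‖iteratedDeriv m g 0‖ * r ^ (m + 1))
      (nhdsWithin 1 (Set.Iio 1)) (nhds (‖iteratedDeriv m g 0‖ * 1 ^ (m + 1))) :=
    tendsto_nhdsWithin_of_tendsto_nhds (Continuous.tendsto (by fun_prop) 1)
  rw [one_pow, mul_one] at hlim
  refine le_of_tendsto hlim ?_
  filter_upwards [Ioo_mem_nhdsLT zero_lt_one] with r hr
  exact key r hr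

theorem norm_iteratedDeriv_le_choose {g h : ℂ → ℂ} (hg : AnalyticAt ℂ g 0)
    (hh : AnalyticAt ℂ h 0) (h0 : h 0 = 1) (hd : deriv h =ᶠ[nhds 0] g * h)
    (hb : ∀ m, ‖iteratedDeriv m g 0‖ ≤ m.factorial * 3) (k : ℕ) :
    ‖iteratedDeriv k h 0 / k.factorial‖ ≤ (k + 2).choose 2 := by
  have key : ∀ k, ‖iteratedDeriv k h 0‖ ≤ k.factorial * (k + 2).choose 2 := by
    intro k
    induction k using Nat.strong_induction_on with
    | _ k ih =>
      cases k with
      | zero => simp [h0]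
      | succ n =>
        rw [iteratedDeriv_succ', hd.iteratedDeriv_eq n,
          iteratedDeriv_mul hg.contDiffAt hh.contDiffAt]
        have hterm : ∀ i ∈ Finset.range (n + 1),
            ‖(n.choose i : ℂ) * iteratedDeriv i g 0 * iteratedDeriv (n - i) h 0‖ ≤
              (n.factorial * 3 * (n - i + 2).choose 2 : ℝ) := by
          intro i hi
          have hin : i ≤ n := Nat.lt_succ_iff.mp (Finset.mem_range.mp hi)
          have hfac : (n.choose i : ℝ) * i.factorial * (n - i).factorial = n.factorial := by
            exact_mod_cast Nat.choose_mul_factorial_mul_factorial hin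
          rw [norm_mul, norm_mul, Complex.norm_natCast]
          calc (n.choose i : ℝ) * ‖iteratedDeriv i g 0‖ * ‖iteratedDeriv (n - i) h 0‖
              ≤ n.choose i * (i.factorial * 3) *
                ((n - i).factorial * (n - i + 2).choose 2) := by
                gcongr
                · exact hb i
                · exact ih _ (by omega)
            _ = n.factorial * 3 * (n - i + 2).choose 2 := by rw [← hfac]; ring
        refine (norm_sum_le_of_le _ hterm).trans_eq ?_
        have hrefl := Finset.sum_range_reflect
          (fun j ↦ (n.factorial * 3 * (j + 2).choose 2 : ℝ)) (n + 1)
        simp only [Nat.add_sub_cancel] at hrefl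
        have hchoose : (n + 3).choose 3 * 3 = (n + 3).choose 2 * (n + 1) := by
          simpa using Nat.choose_succ_right_eq (n + 3) 2
        have hchoose' : ((n + 3).choose 3 * 3 : ℝ) = (n + 3).choose 2 * (n + 1) := by
          exact_mod_cast hchoose
        rw [hrefl, ← Finset.mul_sum, ← Nat.cast_sum, Nat.sum_range_add_choose n 2,
          Nat.factorial_succ, show n + 2 + 1 = n + 3 from rfl, show n + 1 + 2 = n + 3 from rfl]
        push_cast
        linear_combination (n.factorial : ℝ) * hchoose'
  have hk : (0 : ℝ) < k.factorial := by exact_mod_cast k.factorial_pos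
  rw [norm_div, Complex.norm_natCast, div_le_iff₀ hk, mul_comm]
  exact key k

theorem norm_sub_sum_range_le {h : ℂ → ℂ} (hh : DifferentiableOn ℂ h (ball 0 1))
    (hb : ∀ k, ‖iteratedDeriv k h 0 / k.factorial‖ ≤ (k + 2).choose 2) {z : ℂ}
    (hz : ‖z‖ = 1 / 3) {n : ℕ} (hn : 4 ≤ n) :
    ‖h z - ∑ k ∈ Finset.range n, iteratedDeriv k h 0 / k.factorial * z ^ k‖ ≤ 73 / 216 := by
  have hz1 : z ∈ ball (0 : ℂ) 1 := by rw [mem_ball_zero_iff, hz]; norm_num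
  have hs : HasSum (fun k : ℕ ↦ iteratedDeriv k h 0 / k.factorial * z ^ k) (h z) := by
    have := Complex.hasSum_taylorSeries_on_ball hh hz1
    simp only [smul_eq_mul, sub_zero] at this
    have e : (fun k : ℕ ↦ iteratedDeriv k h 0 / k.factorial * z ^ k) =
        fun k : ℕ ↦ (k.factorial : ℂ)⁻¹ * (z ^ k * iteratedDeriv k h 0) := by
      ext k; ring
    rwa [e]
  have hB : HasSum (fun k : ℕ ↦ ((k + 2).choose 2 : ℝ) * (1 / 3) ^ k) (27 / 8) := by
    have := hasSum_choose_mul_geometric_of_norm_lt_one (𝕜 := ℝ) 2 (r := 1 / 3) (by norm_num)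
    rwa [show (1 / (1 - 1 / 3) ^ (2 + 1) : ℝ) = 27 / 8 by norm_num] at this
  have hs' := (hasSum_nat_add_iff' n).mpr hs
  have hB' := (hasSum_nat_add_iff' n).mpr hB
  have h1 := hs'.norm_le_of_bounded hB' (fun k ↦ by
    rw [norm_mul, norm_pow, hz]
    gcongr
    exact hb _)
  refine h1.trans ?_
  have h2 : ∑ k ∈ Finset.range 4, ((k + 2).choose 2 : ℝ) * (1 / 3) ^ k ≤
      ∑ k ∈ Finset.range n, ((k + 2).choose 2 : ℝ) * (1 / 3) ^ k :=
    Finset.sum_le_sum_of_subset_of_nonneg (Finset.range_mono hn) (fun _ _ _ ↦ by positivity)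
  have h3 : ∑ k ∈ Finset.range 4, ((k + 2).choose 2 : ℝ) * (1 / 3) ^ k = 82 / 27 := by
    norm_num [Finset.sum_range_succ, Nat.choose]
  linarith

theorem re_pos_of_re_ge_on_sphere {F : ℂ → ℂ} (hF : Differentiable ℂ F) {r δ : ℝ}
    (h : ∀ z ∈ sphere (0 : ℂ) r, δ ≤ (F z).re) (z : ℂ) (hz : z ∈ ball (0 : ℂ) r) :
    δ ≤ (F z).re := by
  have hr : r ≠ 0 := (pos_of_mem_ball hz).ne'
  have := Complex.norm_le_of_forall_mem_frontier_norm_le (f := fun z ↦ Complex.exp (-F z))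
    isBounded_ball (C := Real.exp (-δ)) (U := ball (0 : ℂ) r) (hF.neg.cexp.diffContOnCl) (by
      intro w hw
      rw [frontier_ball _ hr] at hw
      rw [Complex.norm_exp]
      simpa using h w hw) (subset_closure hz)
  rw [Complex.norm_exp] at this
  simpa using this

theorem norm_le_norm_three_add {q : ℂ} (hq : -(3 / 2) < q.re) : ‖q‖ ≤ ‖3 + q‖ := by
  refine (sq_le_sq₀ (norm_nonneg _) (norm_nonneg _)).mp ?_
  rw [← Complex.normSq_eq_norm_sq, ← Complex.normSq_eq_norm_sq, Complex.normSq_apply,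
    Complex.normSq_apply]
  simp
  nlinarith

theorem three_add_ne_zero {q : ℂ} (hq : -(3 / 2) < q.re) : 3 + q ≠ 0 := by
  intro h
  have := congrArg Complex.re h
  simp at this
  linarith

theorem norm_le_norm_three_add_mul {g : ℂ → ℂ} (hg : DifferentiableOn ℂ g (ball 0 1))
    (hre : ∀ z ∈ ball (0 : ℂ) 1, -(3 / 2) < (z * g z).re) {z : ℂ} (hz : z ∈ ball (0 : ℂ) 1) :
    ‖g z‖ ≤ ‖3 + z * g z‖ := by
  rcases eq_or_ne z 0 with rfl | hz0
  · have := norm_iteratedDeriv_le_of_re_mul_ge hg (fun z hz ↦ (hre z hz).le) 0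
    norm_num at this
    simpa using this
  · have hd : DifferentiableOn ℂ (fun w ↦ w * g w / (3 + w * g w)) (ball 0 1) := by
      intro w hw
      have h1 := hg w hw
      have h2 := three_add_ne_zero (hre w hw)
      fun_prop (disch := assumption)
    have hm : Set.MapsTo (fun w ↦ w * g w / (3 + w * g w)) (ball 0 1) (closedBall 0 1) := by
      intro w hw
      rw [mem_closedBall_zero_iff, norm_div]
      exact div_le_one_of_le₀ (norm_le_norm_three_add (hre w hw)) (norm_nonneg _)
    have h := Complex.norm_le_norm_of_mapsTo_ball hd hm (by simp) (mem_ball_zero_iff.mp hz)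
    have hpos : 0 < ‖3 + z * g z‖ := norm_pos_iff.mpr (three_add_ne_zero (hre z hz))
    rw [norm_div, norm_mul, div_le_iff₀ hpos] at h
    exact le_of_mul_le_mul_left h (norm_pos_iff.mpr hz0)

theorem norm_sub_le_of_norm_le_norm_three_add {w : ℂ} {t : ℝ} (ht0 : 0 ≤ t) (ht1 : t < 1)
    (hw : ‖w‖ ≤ ‖3 + t * w‖) : ‖w - (3 * t / (1 - t ^ 2) : ℝ)‖ ≤ 3 / (1 - t ^ 2) := by
  have hs : 0 < 1 - t ^ 2 := by nlinarith
  refine (sq_le_sq₀ (norm_nonneg _) (by positivity)).mp ?_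
  have h2 := (sq_le_sq₀ (norm_nonneg _) (norm_nonneg _)).mpr hw
  rw [← Complex.normSq_eq_norm_sq, Complex.normSq_apply] at h2 ⊢
  rw [← Complex.normSq_eq_norm_sq, Complex.normSq_apply] at h2
  simp only [sub_re, sub_im, ofReal_re, ofReal_im, add_re, add_im, re_ofReal_mul, im_ofReal_mul,
    re_ofNat, im_ofNat] at h2 ⊢
  set s := 1 - t ^ 2 with hsd
  have e : (3 / s) ^ 2 - ((w.re - 3 * t / s) * (w.re - 3 * t / s) + (w.im - 0) * (w.im - 0)) =
      (9 + 6 * t * w.re - s * (w.re ^ 2 + w.im ^ 2)) / s := by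
    field_simp
    rw [hsd]
    ring
  have : 0 ≤ (9 + 6 * t * w.re - s * (w.re ^ 2 + w.im ^ 2)) / s := by
    apply div_nonneg _ hs.le
    rw [hsd]
    nlinarith
  linarith

theorem re_exp_ge {w : ℂ} (hw : ‖w‖ ≤ 26 / 25) : 59 / 200 ≤ (Complex.exp w).re := by
  rw [Complex.exp_re]
  have h := (sq_le_sq₀ (norm_nonneg _) (by norm_num)).mpr hw
  rw [← Complex.normSq_eq_norm_sq, Complex.normSq_apply] at h
  set x := w.re
  set y := w.im
  have hx : -(26 / 25) ≤ x := (abs_le.mp ((Complex.abs_re_le_norm w).trans hw)).1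
  have hcos : 574 / 1250 + x ^ 2 / 2 ≤ Real.cos y := by
    have := Real.one_sub_sq_div_two_le_cos (x := y)
    nlinarith
  have hexp : 189 / 256 + 27 / 64 * x ≤ Real.exp x := by
    have h1 : x / 4 + 1 ≤ Real.exp (x / 4) := Real.add_one_le_exp _
    have h2 : Real.exp x = Real.exp (x / 4) ^ 4 := by
      rw [← Real.exp_nat_mul]; congr 1; push_cast; ring
    have h3 : (x / 4 + 1) ^ 4 ≤ Real.exp (x / 4) ^ 4 := by gcongr; linarith
    rw [h2]
    refine le_trans ?_ h3
    nlinarith [sq_nonneg ((x / 4 + 1) ^ 2 - 9 / 16), sq_nonneg (x / 4 + 1 - 3 / 4)]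
  calc (59 / 200 : ℝ) ≤ (189 / 256 + 27 / 64 * x) * (574 / 1250 + x ^ 2 / 2) := by
        nlinarith [mul_nonneg (by linarith : 0 ≤ x + 26 / 25) (sq_nonneg (x + 2 / 5)),
          sq_nonneg (x + 2 / 5)]
    _ ≤ Real.exp x * Real.cos y := by
        apply mul_le_mul hexp hcos _ (Real.exp_pos _).le
        positivity

theorem re_ge_of_norm_eq_third {h g : ℂ → ℂ} (hh : DifferentiableOn ℂ h (ball 0 1))
    (hg : DifferentiableOn ℂ g (ball 0 1)) (h0 : h 0 = 1)
    (hd : ∀ z ∈ ball (0 : ℂ) 1, deriv h z = g z * h z)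
    (hre : ∀ z ∈ ball (0 : ℂ) 1, -(3 / 2) < (z * g z).re) {z : ℂ} (hz : ‖z‖ = 1 / 3) :
    34 / 100 ≤ (h z).re := by
  obtain ⟨L, hL0, hL⟩ := hg.isExactOn_ball.with_val_at 0 0
  have hzb : z ∈ ball (0 : ℂ) 1 := by rw [mem_ball_zero_iff, hz]; norm_num
  have hexp : h z = Complex.exp (L z) := by
    have hc : ∀ w ∈ ball (0 : ℂ) 1, HasDerivAt (fun w ↦ h w * Complex.exp (-L w)) 0 w := by
      intro w hw
      have h1 := ((hh w hw).differentiableAt (isOpen_ball.mem_nhds hw)).hasDerivAt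
      have h2 := h1.mul (hL w hw).neg.cexp
      rw [hd w hw] at h2
      exact h2.congr_deriv (by ring)
    have := (convex_ball (0 : ℂ) 1).is_const_of_fderivWithin_eq_zero (𝕜 := ℂ)
      (f := fun w ↦ h w * Complex.exp (-L w))
      (fun w hw ↦ (hc w hw).differentiableAt.differentiableWithinAt)
      (fun w hw ↦ by
        rw [fderivWithin_of_isOpen isOpen_ball hw]
        simpa using! (hc w hw).hasFDerivAt.fderiv) hzb (mem_ball_self one_pos)
    simp only [h0, hL0, neg_zero, Complex.exp_zero, mul_one, Complex.exp_neg] at this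
    exact (mul_inv_eq_one₀ (Complex.exp_ne_zero _)).mp this
  set ζ : ℂ := 3 * z
  have hζ : ‖ζ‖ = 1 := by simp [ζ, hz]
  have hmem : ∀ t ∈ Set.Icc (0 : ℝ) (1 / 3), (t : ℂ) * ζ ∈ ball (0 : ℂ) 1 := by
    intro t ht
    rw [mem_ball_zero_iff, norm_mul, hζ, Complex.norm_real, Real.norm_of_nonneg ht.1]
    linarith [ht.2]
  have hF : ∀ t ∈ Set.Icc (0 : ℝ) (1 / 3), HasDerivAt
      (fun t : ℝ ↦ L (t * ζ) + ((3 / 2 * Real.log (1 - t ^ 2) : ℝ) : ℂ))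
      (ζ * g (t * ζ) - (3 * t / (1 - t ^ 2) : ℝ)) t := by
    intro t ht
    have hpos : 1 - t ^ 2 ≠ 0 := by nlinarith [ht.1, ht.2]
    have h1 : HasDerivAt (fun x : ℂ ↦ x * ζ) ζ (t : ℂ) := by
      simpa using (hasDerivAt_id (t : ℂ)).mul_const ζ
    have h2 := ((hL _ (hmem t ht)).comp (t : ℂ) h1).comp_ofReal
    have h3 : HasDerivAt (fun t : ℝ ↦ 1 - t ^ 2) (-(2 * t)) t := by
      simpa using ((hasDerivAt_id t).pow 2).const_sub 1
    have h4 := ((h3.log hpos).const_mul (3 / 2)).ofReal_comp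
    refine (h2.add h4).congr_deriv ?_
    have e : 3 / 2 * (-(2 * t) / (1 - t ^ 2)) = -(3 * t / (1 - t ^ 2)) := by ring
    rw [e, ofReal_neg]
    ring
  have hB : ∀ t ∈ Set.Icc (0 : ℝ) (1 / 3), HasDerivAt
      (fun t : ℝ ↦ 3 / 2 * (Real.log (1 + t) - Real.log (1 - t))) (3 / (1 - t ^ 2)) t := by
    intro t ht
    have hp : 1 + t ≠ 0 := by linarith [ht.1]
    have hm : 1 - t ≠ 0 := by linarith [ht.2]
    have hpos : 1 - t ^ 2 ≠ 0 := by nlinarith [ht.1, ht.2]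
    have h1 := ((hasDerivAt_id t).const_add 1).log hp
    have h2 := ((hasDerivAt_id t).const_sub 1).log hm
    refine ((h1.sub h2).const_mul (3 / 2)).congr_deriv ?_
    simp only [id]
    field_simp
    ring
  have hmain := image_norm_le_of_norm_deriv_right_le_deriv_boundary'
    (fun t ht ↦ (hF t ht).continuousAt.continuousWithinAt)
    (fun t ht ↦ (hF t (Set.Ico_subset_Icc_self ht)).hasDerivWithinAt)
    (by simp [hL0])
    (fun t ht ↦ (hB t ht).continuousAt.continuousWithinAt)
    (fun t ht ↦ (hB t (Set.Ico_subset_Icc_self ht)).hasDerivWithinAt)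
    (by
      intro t ht
      apply norm_sub_le_of_norm_le_norm_three_add ht.1 (by linarith [ht.2])
      have := norm_le_norm_three_add_mul hg hre (hmem t (Set.Ico_subset_Icc_self ht))
      have e : (t : ℂ) * (ζ * g (t * ζ)) = t * ζ * g (t * ζ) := by ring
      rw [norm_mul, hζ, one_mul, e]
      exact this)
    (Set.right_mem_Icc.mpr (by norm_num : (0 : ℝ) ≤ 1 / 3))
  have hzz : ((1 / 3 : ℝ) : ℂ) * ζ = z := by simp [ζ]
  rw [hzz] at hmain
  have hlog : 3 / 2 * (Real.log (1 + 1 / 3) - Real.log (1 - 1 / 3)) ≤ (26 / 25 : ℝ) := by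
    rw [← Real.log_div (by norm_num) (by norm_num)]
    norm_num
    linarith [Real.log_two_lt_d9]
  have hre' := re_exp_ge (hmain.trans hlog)
  rw [Complex.exp_add, ← ofReal_exp, re_mul_ofReal, ← hexp] at hre'
  have hl : Real.log (1 - (1 / 3) ^ 2) ≤ -(1 / 9) := by
    have := Real.log_le_sub_one_of_pos (by norm_num : (0 : ℝ) < 1 - (1 / 3) ^ 2)
    norm_num at this ⊢
    linarith
  have hE : Real.exp (3 / 2 * Real.log (1 - (1 / 3) ^ 2)) * (7 / 6) ≤ 1 := by
    have h1 := Real.add_one_le_exp (-(3 / 2 * Real.log (1 - (1 / 3) ^ 2)))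
    have h2 := Real.exp_pos (3 / 2 * Real.log (1 - (1 / 3) ^ 2))
    calc _ ≤ Real.exp (3 / 2 * Real.log (1 - (1 / 3) ^ 2)) *
          Real.exp (-(3 / 2 * Real.log (1 - (1 / 3) ^ 2))) := by gcongr; linarith
      _ = 1 := by rw [← Real.exp_add]; simp
  have hEpos := Real.exp_pos (3 / 2 * Real.log (1 - (1 / 3) ^ 2))
  by_contra! hlt
  have : (h z).re * Real.exp (3 / 2 * Real.log (1 - (1 / 3) ^ 2)) ≤
      34 / 100 * Real.exp (3 / 2 * Real.log (1 - (1 / 3) ^ 2)) := by gcongr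
  linarith

theorem norm_sub_le_norm_one_sub_conj_mul {a x : ℂ} (ha : ‖a‖ ≤ 1) (hx : ‖x‖ ≤ 1) :
    ‖x - a‖ ≤ ‖1 - (starRingEnd ℂ) a * x‖ := by
  have ha2 : ‖a‖ ^ 2 ≤ 1 := pow_le_one₀ (norm_nonneg _) ha
  have hx2 : ‖x‖ ^ 2 ≤ 1 := pow_le_one₀ (norm_nonneg _) hx
  refine (sq_le_sq₀ (norm_nonneg _) (norm_nonneg _)).mp ?_
  have h := mul_nonneg (sub_nonneg.mpr ha2) (sub_nonneg.mpr hx2)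
  rw [← Complex.normSq_eq_norm_sq, Complex.normSq_apply] at h ⊢
  rw [← Complex.normSq_eq_norm_sq, Complex.normSq_apply] at h ⊢
  simp only [sub_re, sub_im, mul_re, mul_im, conj_re, conj_im, one_re, one_im]
  linarith

/-- **Schwarz–Pick** at the origin, for `s • φ` with `0 < s < 1`. -/
theorem mul_norm_deriv_zero_le {φ : ℂ → ℂ} (hd : DifferentiableOn ℂ φ (ball 0 1))
    (hb : ∀ z ∈ ball (0 : ℂ) 1, ‖φ z‖ ≤ 1) {s : ℝ} (hs0 : 0 < s) (hs1 : s < 1) :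
    s * ‖deriv φ 0‖ ≤ 1 - s ^ 2 * ‖φ 0‖ ^ 2 := by
  have h0 : (0 : ℂ) ∈ ball (0 : ℂ) 1 := mem_ball_self one_pos
  have hsb : ∀ z ∈ ball (0 : ℂ) 1, ‖(s : ℂ) * φ z‖ ≤ s := by
    intro z hz
    rw [norm_mul, Complex.norm_real, Real.norm_of_nonneg hs0.le]
    exact mul_le_of_le_one_right hs0.le (hb z hz)
  set a : ℂ := s * φ 0
  have ha : ‖a‖ ≤ s := hsb 0 h0
  have hne : ∀ z ∈ ball (0 : ℂ) 1, 1 - (starRingEnd ℂ) a * (s * φ z) ≠ 0 := by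
    intro z hz h
    have h1 : ‖(starRingEnd ℂ) a * (s * φ z)‖ = 1 := by rw [← sub_eq_zero.mp h, norm_one]
    rw [norm_mul, RCLike.norm_conj] at h1
    have := mul_le_mul ha (hsb z hz) (norm_nonneg _) hs0.le
    nlinarith
  set ψ : ℂ → ℂ := fun z ↦ (s * φ z - a) / (1 - (starRingEnd ℂ) a * (s * φ z))
  have hψd : DifferentiableOn ℂ ψ (ball 0 1) := by
    intro z hz
    have h1 := hd z hz
    have h2 := hne z hz
    fun_prop (disch := assumption)
  have hψ0 : ψ 0 = 0 := by simp [ψ, a]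
  have hψm : Set.MapsTo ψ (ball 0 1) (closedBall (ψ 0) 1) := by
    intro z hz
    rw [hψ0, mem_closedBall_zero_iff, norm_div]
    exact div_le_one_of_le₀ (norm_sub_le_norm_one_sub_conj_mul (ha.trans hs1.le)
      ((hsb z hz).trans hs1.le)) (norm_nonneg _)
  have hle := Complex.norm_deriv_le_one_of_mapsTo_ball hψd hψm one_pos
  have hφ := (hd.differentiableAt (isOpen_ball.mem_nhds h0)).hasDerivAt
  have hder := ((hφ.const_mul (s : ℂ)).sub_const a).div
    (((hφ.const_mul (s : ℂ)).const_mul ((starRingEnd ℂ) a)).const_sub 1) (hne 0 h0)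
  have haa : 1 - (starRingEnd ℂ) a * (s * φ 0) = ((1 - ‖a‖ ^ 2 : ℝ) : ℂ) := by
    rw [show (s : ℂ) * φ 0 = a from rfl, ← Complex.normSq_eq_norm_sq, mul_comm,
      Complex.mul_conj]
    push_cast; rfl
  have hpos : 0 < 1 - ‖a‖ ^ 2 := by nlinarith [norm_nonneg a]
  have hval : deriv ψ 0 = s * deriv φ 0 / ((1 - ‖a‖ ^ 2 : ℝ) : ℂ) := by
    refine (HasDerivAt.deriv hder).trans ?_
    rw [haa, show (s : ℂ) * φ 0 - a = 0 from sub_self _]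
    have : ((1 - ‖a‖ ^ 2 : ℝ) : ℂ) ≠ 0 := by exact_mod_cast hpos.ne'
    field_simp
    ring
  rw [hval, norm_div, norm_mul, Complex.norm_real, Complex.norm_real,
    Real.norm_of_nonneg hs0.le, Real.norm_of_nonneg hpos.le, div_le_one hpos] at hle
  have : ‖a‖ ^ 2 = s ^ 2 * ‖φ 0‖ ^ 2 := by
    simp only [a]
    rw [norm_mul, Complex.norm_real, Real.norm_of_nonneg hs0.le, mul_pow]
  linarith

theorem re_quadratic_taylor_pos {h g : ℂ → ℂ} (hh : DifferentiableOn ℂ h (ball 0 1))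
    (hg : DifferentiableOn ℂ g (ball 0 1)) (h0 : h 0 = 1)
    (hd : ∀ z ∈ ball (0 : ℂ) 1, deriv h z = g z * h z)
    (hre : ∀ z ∈ ball (0 : ℂ) 1, -(3 / 2) < (z * g z).re) {z : ℂ} (hz : ‖z‖ < 1 / 3) :
    0 < (1 + deriv h 0 * z + deriv (deriv h) 0 / 2 * z ^ 2).re := by
  have hmem : (0 : ℂ) ∈ ball (0 : ℂ) 1 := mem_ball_self one_pos
  set φ : ℂ → ℂ := fun z ↦ g z / (3 + z * g z)
  have hφd : DifferentiableOn ℂ φ (ball 0 1) := by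
    intro w hw
    have h1 := hg w hw
    have h2 := three_add_ne_zero (hre w hw)
    fun_prop (disch := assumption)
  have hφb : ∀ w ∈ ball (0 : ℂ) 1, ‖φ w‖ ≤ 1 := fun w hw ↦ by
    rw [norm_div]
    exact div_le_one_of_le₀ (norm_le_norm_three_add_mul hg hre hw) (norm_nonneg _)
  have hpick := mul_norm_deriv_zero_le hφd hφb (s := 9 / 10) (by norm_num) (by norm_num)
  have hc0 := hφb 0 hmem
  have hrel : ∀ w ∈ ball (0 : ℂ) 1, deriv h w = φ w * (3 * h w + w * deriv h w) := by
    intro w hw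
    have h2 := three_add_ne_zero (hre w hw)
    rw [hd w hw]
    simp only [φ]
    rw [show 3 * h w + w * (g w * h w) = (3 + w * g w) * h w by ring, ← mul_assoc,
      div_mul_cancel₀ _ h2]
  have hh' : DifferentiableOn ℂ (deriv h) (ball 0 1) := hh.deriv isOpen_ball
  have hb1 : deriv h 0 = 3 * φ 0 := by
    rw [hrel 0 hmem, h0]; ring
  have hb2 : deriv (deriv h) 0 = 3 * deriv φ 0 + 12 * φ 0 ^ 2 := by
    have hnhds := isOpen_ball.mem_nhds hmem
    have heq : deriv h =ᶠ[nhds 0] fun w ↦ φ w * (3 * h w + w * deriv h w) :=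
      Filter.eventually_of_mem hnhds hrel
    have d1 := (hφd.differentiableAt hnhds).hasDerivAt
    have d2 := (hh.differentiableAt hnhds).hasDerivAt
    have d3 := (hh'.differentiableAt hnhds).hasDerivAt
    have d4 := d1.mul ((d2.const_mul 3).add ((hasDerivAt_id (0 : ℂ)).mul d3))
    rw [heq.deriv_eq]
    refine (HasDerivAt.deriv d4).trans ?_
    simp [h0, hb1]
    ring
  rw [hb1, hb2]
  set c := φ 0
  set d := deriv φ 0
  set u : ℂ := 3 * c * z
  have e : 1 + 3 * c * z + (3 * d + 12 * c ^ 2) / 2 * z ^ 2 =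
      1 + u + ((2 / 3 : ℝ) : ℂ) * u ^ 2 + ((3 / 2 : ℝ) : ℂ) * (d * z ^ 2) := by
    simp only [u]; push_cast; ring
  have hd' : -(‖d‖ * ‖z‖ ^ 2) ≤ (d * z ^ 2).re := by
    have := (abs_le.mp (Complex.abs_re_le_norm (d * z ^ 2))).1
    rwa [norm_mul, norm_pow] at this
  have hu : u.re ^ 2 + u.im ^ 2 = 9 * ‖c‖ ^ 2 * ‖z‖ ^ 2 := by
    have : ‖u‖ = 3 * ‖c‖ * ‖z‖ := by simp [u]
    have h2 := Complex.normSq_eq_norm_sq u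
    rw [Complex.normSq_apply, this] at h2
    linarith
  rw [e]
  simp only [add_re, one_re, re_ofReal_mul]
  have hu2 : (u ^ 2).re = u.re * u.re - u.im * u.im := by rw [pow_two, mul_re]
  rw [hu2]
  have hR : ‖c‖ ^ 2 ≤ 1 := pow_le_one₀ (norm_nonneg _) hc0
  have hR0 : 0 ≤ ‖c‖ ^ 2 := by positivity
  have hq : ‖z‖ ^ 2 ≤ 1 / 9 := by nlinarith [norm_nonneg z]
  have hq0 : 0 ≤ ‖z‖ ^ 2 := by positivity
  set R := ‖c‖ ^ 2
  set q := ‖z‖ ^ 2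
  have hdq : ‖d‖ * q ≤ 10 / 9 * (1 - 81 / 100 * R) * q := by
    gcongr
    linarith
  have hRq : R * q ≤ 1 / 9 := by nlinarith
  nlinarith [sq_nonneg (u.re + 3 / 8)]

theorem hasDerivAt_sectionF (f : ℂ → ℂ) (n : ℕ) (z : ℂ) :
    HasDerivAt (sectionF f n)
      (∑ k ∈ Finset.range n, iteratedDeriv k (deriv f) 0 / k.factorial * z ^ k) z := by
  have h : ∀ k ∈ Finset.range n, HasDerivAt
      (fun z : ℂ ↦ iteratedDeriv (k + 1) f 0 / (k + 1).factorial * z ^ (k + 1))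
      (iteratedDeriv k (deriv f) 0 / k.factorial * z ^ k) z := by
    intro k _
    refine ((hasDerivAt_pow (k + 1) z).const_mul _).congr_deriv ?_
    have h1 : (k.factorial : ℂ) ≠ 0 := by exact_mod_cast k.factorial_ne_zero
    have h2 : ((k : ℂ) + 1) ≠ 0 := by exact_mod_cast k.succ_ne_zero
    rw [iteratedDeriv_succ', Nat.factorial_succ]
    push_cast
    field_simp
  have hs : sectionF f n =
      fun z ↦ ∑ k ∈ Finset.range n, iteratedDeriv (k + 1) f 0 / (k + 1).factorial * z ^ (k + 1) := by
    ext w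
    rw [sectionF, Finset.range_eq_Ico, Finset.sum_Ico_add' (fun k ↦
      iteratedDeriv k f 0 / (k.factorial : ℂ) * w ^ k) 0 n 1]
    rfl
  rw [hs]
  exact HasDerivAt.fun_sum h

theorem section_injOn (f : ℂ → ℂ) (hf : IsInClassF f) (n : ℕ) (hn : 2 ≤ n) :
    Set.InjOn (sectionF f n) (ball (0 : ℂ) (1/3)) := by
  obtain ⟨hfa, -, h0, hne, hre⟩ := hf
  refine injOn_of_re_deriv_pos (convex_ball _ _) (fun z _ ↦ hasDerivAt_sectionF f n z) ?_
  have hh : DifferentiableOn ℂ (deriv f) (ball 0 1) := hfa.deriv.differentiableOn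
  have hh' : DifferentiableOn ℂ (deriv (deriv f)) (ball 0 1) := hfa.deriv.deriv.differentiableOn
  set h := deriv f
  set g : ℂ → ℂ := fun z ↦ deriv h z / h z
  have hg : DifferentiableOn ℂ g (ball 0 1) := hh'.div hh hne
  have hd : ∀ z ∈ ball (0 : ℂ) 1, deriv h z = g z * h z := fun z hz ↦
    (div_mul_cancel₀ _ (hne z hz)).symm
  have hgre : ∀ z ∈ ball (0 : ℂ) 1, -(3 / 2) < (z * g z).re := by
    intro z hz
    have := hre z hz
    rw [add_re, one_re, mul_div_assoc] at this
    simp only [g]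
    linarith
  have hnhds : ball (0 : ℂ) 1 ∈ nhds 0 := ball_mem_nhds _ one_pos
  have hcoef := norm_iteratedDeriv_le_choose (hg.analyticAt hnhds) (hh.analyticAt hnhds) h0
    (Filter.eventually_of_mem hnhds hd) (fun m ↦ by
      have := norm_iteratedDeriv_le_of_re_mul_ge hg (fun z hz ↦ (hgre z hz).le) m
      norm_num at this
      exact this)
  intro z hz
  have hz' : ‖z‖ < 1 / 3 := mem_ball_zero_iff.mp hz
  obtain rfl | rfl | hn4 : n = 2 ∨ n = 3 ∨ 4 ≤ n := by omega
  · have h1 := hcoef 1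
    simp only [iteratedDeriv_one, Nat.factorial_one, Nat.cast_one, div_one] at h1
    norm_num [Nat.choose] at h1
    simp only [Finset.sum_range_succ, Finset.sum_range_zero, iteratedDeriv_zero, iteratedDeriv_one,
      h0]
    have h2 := (abs_le.mp (Complex.abs_re_le_norm (deriv h 0 * z))).1
    rw [norm_mul] at h2
    have h3 : ‖deriv h 0‖ * ‖z‖ ≤ 3 * ‖z‖ := by gcongr
    simp
    rw [mul_re] at h2
    linarith
  · have h1 := re_quadratic_taylor_pos hh hg h0 hd hgre hz'
    simpa [Finset.sum_range_succ, h0, iteratedDeriv_succ] using h1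
  · have hsph : ∀ w ∈ sphere (0 : ℂ) (1 / 3), 1 / 1000 ≤
        (∑ k ∈ Finset.range n, iteratedDeriv k h 0 / k.factorial * w ^ k).re := by
      intro w hw
      rw [mem_sphere_zero_iff_norm] at hw
      have h1 := re_ge_of_norm_eq_third hh hg h0 hd hgre hw
      have h2 := norm_sub_sum_range_le hh hcoef hw hn4
      have h3 := (Complex.re_le_norm _).trans h2
      rw [sub_re] at h3
      linarith
    have := re_pos_of_re_ge_on_sphere (by fun_prop) hsph z hz
    linarith
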